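/- arXiv:1501.04817 — 6 statements merged into one kernel-verified Lean document; each statement's English description precedes it below -/
import Mathlib

section
/- Let Φ ∈ ℝ^{m×n} have restricted isometry constant δ := δ_{2K} ∈ (0,1) of order 2K, let x ∈ ℝ^n be K-sparse with support T, |T| = K ≥ 1, set κ := max_{i,j∈T} |x_i|/|x_j| and τ := δ^{1/2}, and let y = Φx + v with v ≠ 0 and SNR ≥ κ²·δ^{−3/2}. Then for every run of OMP and every integer k with 0 ≤ k ≤ K − ⌈τK⌉, the residual satisfies ‖Φᵀ r^k‖_∞² ≥ (1 − 6τ)·(x_τ^k)². -/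
noncomputable section
open Finset

/-- `Vec n` is `ℝ^n` with the Euclidean (ℓ²) norm. -/
abbrev Vec (n : ℕ) := EuclideanSpace ℝ (Fin n)

/-- The standard inner product `⟨u, v⟩ = ∑ i, u i * v i`. -/
def dot {n : ℕ} (u v : Vec n) : ℝ := ∑ i, u i * v i

/-- The `j`-th column of a matrix, as a Euclidean vector. -/
def col {m n : ℕ} (Φ : Matrix (Fin m) (Fin n) ℝ) (j : Fin n) : Vec m :=
  WithLp.toLp 2 fun i => Φ i j

/-- Matrix-vector multiplication `Φ x`, valued in Euclidean space. -/
def mulVec' {m n : ℕ} (Φ : Matrix (Fin m) (Fin n) ℝ) (x : Vec n) : Vec m :=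
  WithLp.toLp 2 fun i => ∑ j, Φ i j * x j

/-- The support of a vector, as a `Finset`. -/
def suppF {n : ℕ} (x : Vec n) : Finset (Fin n) :=
  Finset.univ.filter fun i => x i ≠ 0

/-- Restriction of a vector to an index set (zero outside the set). -/
def restrict {n : ℕ} (x : Vec n) (S : Finset (Fin n)) : Vec n :=
  WithLp.toLp 2 fun i => if i ∈ S then x i else 0

/-- `RIPConst Φ L δ` : δ is the restricted isometry constant of `Φ` of order `L`,
i.e. the smallest `c ≥ 0` such that `(1-c)‖u‖² ≤ ‖Φu‖² ≤ (1+c)‖u‖²` for all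
`L`-sparse `u`. -/
def RIPConst {m n : ℕ} (Φ : Matrix (Fin m) (Fin n) ℝ) (L : ℕ) (δ : ℝ) : Prop :=
  IsLeast {c : ℝ | 0 ≤ c ∧ ∀ u : Vec n, (suppF u).card ≤ L →
    (1 - c) * ‖u‖ ^ 2 ≤ ‖mulVec' Φ u‖ ^ 2 ∧ ‖mulVec' Φ u‖ ^ 2 ≤ (1 + c) * ‖u‖ ^ 2} δ

/-- Signal-to-noise ratio `‖Φx‖²/‖v‖²`. -/
def SNR {m n : ℕ} (Φ : Matrix (Fin m) (Fin n) ℝ) (x : Vec n) (v : Vec m) : ℝ :=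
  ‖mulVec' Φ x‖ ^ 2 / ‖v‖ ^ 2

/-- A run of `N` iterations of Orthogonal Matching Pursuit on data `(Φ, y)`:
`idx (k+1) = t^{k+1}` is the index selected at iteration `k+1`, `sets k = T^k`,
`est k = x^k` and `res k = r^k`. -/
structure OMPRun {m n : ℕ} (Φ : Matrix (Fin m) (Fin n) ℝ) (y : Vec m) (N : ℕ) where
  idx : ℕ → Fin n
  sets : ℕ → Finset (Fin n)
  est : ℕ → Vec n
  res : ℕ → Vec m
  sets_zero : sets 0 = ∅
  est_zero : est 0 = 0
  res_zero : res 0 = y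
  idx_not_mem : ∀ k < N, idx (k + 1) ∉ sets k
  idx_max : ∀ k < N, ∀ i : Fin n, i ∉ sets k →
    |dot (col Φ i) (res k)| ≤ |dot (col Φ (idx (k + 1))) (res k)|
  sets_succ : ∀ k < N, sets (k + 1) = insert (idx (k + 1)) (sets k)
  est_supp : ∀ k < N, suppF (est (k + 1)) ⊆ sets (k + 1)
  est_min : ∀ k < N, ∀ u : Vec n, suppF u ⊆ sets (k + 1) →
    ‖y - mulVec' Φ (est (k + 1))‖ ≤ ‖y - mulVec' Φ u‖
  res_succ : ∀ k < N, res (k + 1) = y - mulVec' Φ (est (k + 1))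

/-- The vector `Φᵀ w` restricted to an index set `A` (the vector of correlations
`⟨φ_i, w⟩` for `i ∈ A`, zero outside `A`), as a Euclidean vector. -/
def colDots {m n : ℕ} (Φ : Matrix (Fin m) (Fin n) ℝ) (A : Finset (Fin n)) (w : Vec m) : Vec n :=
  WithLp.toLp 2 fun i => if i ∈ A then dot (col Φ i) w else 0

/-- The vector `Φᵀ w` of all column correlations, as a plain function (so `‖·‖`
is the sup/ℓ∞ norm). -/
def dualVec {m n : ℕ} (Φ : Matrix (Fin m) (Fin n) ℝ) (w : Vec m) : Fin n → ℝ :=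
  fun i => dot (col Φ i) w

/-- `P⊥_S w` : the projection of `w` onto the orthogonal complement of the span
of the columns of `Φ` indexed by `S`. -/
def perpProj {m n : ℕ} (Φ : Matrix (Fin m) (Fin n) ℝ) (S : Finset (Fin n)) (w : Vec m) : Vec m :=
  w - (Submodule.orthogonalProjectionOnto (Submodule.span ℝ (col Φ '' (S : Set (Fin n)))) w : Vec m)

/-- The `j`-th largest value (1-indexed) among `{|x i| : i ∈ Γ}` (with
multiplicities); `0` if `j > |Γ|` or `j = 0`. -/
def kthLargest {n : ℕ} (x : Vec n) (Γ : Finset (Fin n)) (j : ℕ) : ℝ :=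
  if 1 ≤ j ∧ j ≤ Γ.card then
    (Multiset.sort (Γ.val.map fun i => |x i|) (· ≤ ·)).getD (Γ.card - j) 0
  else 0


theorem aux_sqle {a b : ℝ} (h : a ^ 2 ≤ b ^ 2) (hb : 0 ≤ b) : a ≤ b := by
  by_contra hc
  push Not at hc
  nlinarith

theorem aux_kth {n : ℕ} (x : Vec n) (Γ : Finset (Fin n)) (j : ℕ) (h1 : 1 ≤ j) (h2 : j ≤ Γ.card) :
    ∃ A ⊆ Γ, A.card = j ∧ (∀ i ∈ A, kthLargest x Γ j ≤ |x i|) ∧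
      (∀ i ∈ Γ \ A, |x i| ≤ kthLargest x Γ j) ∧ ∃ i ∈ Γ, kthLargest x Γ j = |x i| := by
  have hw0 : kthLargest x Γ j =
      (Multiset.sort (Γ.val.map fun i => |x i|) (· ≤ ·)).getD (Γ.card - j) 0 := by
    unfold kthLargest
    rw [if_pos ⟨h1, h2⟩]
  set w := kthLargest x Γ j with hw
  clear_value w
  set l := Multiset.sort (Γ.val.map fun i => |x i|) (· ≤ ·) with hl
  have hcoe : (l : Multiset ℝ) = Γ.val.map fun i => |x i| := Multiset.sort_eq _ _
  have hsort : l.Pairwise (· ≤ ·) := Multiset.pairwise_sort _ _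
  have hlen : l.length = Γ.card := by
    have := congrArg Multiset.card hcoe
    simpa using this
  clear_value l
  have hq : Γ.card - j < l.length := by omega
  have hwl : w = l[Γ.card - j] := by
    rw [hw0, List.getD_eq_getElem _ _ hq]
  have hmono := List.pairwise_iff_getElem.1 hsort
  have hcount : ∀ (p : ℝ → Prop) [DecidablePred p],
      (Γ.filter fun i => p |x i|).card = l.countP (fun a => decide (p a)) := by
    intro p _
    have h := Multiset.countP_map (fun i => |x i|) Γ.val p
    rw [← hcoe, Multiset.coe_countP] at h
    rw [h]; rfl
  have hge : j ≤ (Γ.filter fun i => w ≤ |x i|).card := by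
    rw [hcount (fun a => w ≤ a)]
    have hsub := (List.drop_sublist (Γ.card - j) l).countP_le (p := fun a => decide (w ≤ a))
    have heq : (l.drop (Γ.card - j)).countP (fun a => decide (w ≤ a))
        = (l.drop (Γ.card - j)).length := by
      rw [List.countP_eq_length]
      intro a ha
      obtain ⟨i, hi, rfl⟩ := List.mem_drop_iff_getElem.1 ha
      simp only [decide_eq_true_eq]
      rw [hwl]
      rcases Nat.eq_zero_or_pos i with h | h
      · subst h; simp
      · exact hmono _ _ _ _ (by omega)
    rw [List.length_drop] at heq
    omega
  have hlt : (Γ.filter fun i => w < |x i|).card ≤ j := by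
    rw [hcount (fun a => w < a)]
    have hsplit : l.countP (fun a => decide (w < a)) =
        (l.take (Γ.card - j)).countP (fun a => decide (w < a)) +
        (l.drop (Γ.card - j)).countP (fun a => decide (w < a)) := by
      rw [← List.countP_append, List.take_append_drop]
    have hz : (l.take (Γ.card - j)).countP (fun a => decide (w < a)) = 0 := by
      rw [List.countP_eq_zero]
      intro a ha
      obtain ⟨i, hi, rfl⟩ := List.mem_take_iff_getElem.1 ha
      simp only [decide_eq_true_eq, not_lt]
      rw [hwl]
      exact hmono _ _ _ _ (by omega)
    have hle := List.countP_le_length (p := fun a => decide (w < a)) (l := l.drop (Γ.card - j))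
    rw [List.length_drop] at hle
    omega
  obtain ⟨A, hA1, hA2, hA3⟩ := Finset.exists_subsuperset_card_eq
    (s := Γ.filter fun i => w < |x i|) (t := Γ.filter fun i => w ≤ |x i|)
    (by
      intro i hi
      simp only [Finset.mem_filter] at hi ⊢
      exact ⟨hi.1, hi.2.le⟩) hlt hge
  refine ⟨A, fun i hi => (Finset.mem_filter.1 (hA2 hi)).1, hA3,
    fun i hi => (Finset.mem_filter.1 (hA2 hi)).2, ?_, ?_⟩
  · intro i hi
    by_contra hcon
    push Not at hcon
    rw [Finset.mem_sdiff] at hi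
    exact hi.2 (hA1 (Finset.mem_filter.2 ⟨hi.1, hcon⟩))
  · have hm : w ∈ (l : Multiset ℝ) := by
      rw [hwl]; exact Multiset.mem_coe.2 (List.getElem_mem hq)
    rw [hcoe, Multiset.mem_map] at hm
    obtain ⟨i, hi, hi2⟩ := hm
    exact ⟨i, hi, hi2.symm⟩

theorem aux_add {m n : ℕ} (Φ : Matrix (Fin m) (Fin n) ℝ) (u z : Vec n) :
    mulVec' Φ (u + z) = mulVec' Φ u + mulVec' Φ z := by
  ext i
  simp [mulVec', mul_add, Finset.sum_add_distrib]

theorem aux_smul {m n : ℕ} (Φ : Matrix (Fin m) (Fin n) ℝ) (c : ℝ) (u : Vec n) :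
    mulVec' Φ (c • u) = c • mulVec' Φ u := by
  ext i
  simp only [mulVec', PiLp.smul_apply, smul_eq_mul, Finset.mul_sum]
  exact Finset.sum_congr rfl fun j _ => by ring

theorem aux_sub {m n : ℕ} (Φ : Matrix (Fin m) (Fin n) ℝ) (u z : Vec n) :
    mulVec' Φ (u - z) = mulVec' Φ u - mulVec' Φ z := by
  ext i
  simp [mulVec', mul_sub, Finset.sum_sub_distrib]

theorem aux_inner {n : ℕ} (u z : Vec n) : inner ℝ u z = ∑ i, u i * z i := by
  simp [PiLp.inner_apply, mul_comm]

theorem aux_innerΦ {m n : ℕ} (Φ : Matrix (Fin m) (Fin n) ℝ) (u : Vec n) (r : Vec m) :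
    inner ℝ (mulVec' Φ u) r = ∑ j, u j * dot (col Φ j) r := by
  rw [aux_inner]
  simp only [mulVec', dot, col, Finset.sum_mul, Finset.mul_sum]
  rw [Finset.sum_comm]
  exact Finset.sum_congr rfl fun j _ => Finset.sum_congr rfl fun i _ => by ring

theorem aux_restrict_sq {n : ℕ} (x : Vec n) (S : Finset (Fin n)) :
    ‖restrict x S‖ ^ 2 = ∑ i ∈ S, |x i| ^ 2 := by
  rw [EuclideanSpace.real_norm_sq_eq]
  simp [_root_.restrict, ite_pow, Finset.sum_ite_mem]

theorem aux_supp {n : ℕ} {u : Vec n} {S : Finset (Fin n)} (h : ∀ i, i ∉ S → u i = 0) :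
    suppF u ⊆ S := by
  intro i hi
  by_contra hc
  exact (Finset.mem_filter.1 hi).2 (h i hc)

theorem aux_zero {n : ℕ} {u : Vec n} {S : Finset (Fin n)} (h : suppF u ⊆ S) :
    ∀ i, i ∉ S → u i = 0 := by
  intro i hi
  by_contra hc
  exact hi (h (Finset.mem_filter.2 ⟨Finset.mem_univ _, hc⟩))

/-- Near-orthogonality from the restricted isometry property. -/
theorem aux_rip {m n L : ℕ} (Φ : Matrix (Fin m) (Fin n) ℝ) (δ : ℝ)
    (hR : ∀ u : Vec n, (suppF u).card ≤ L →
      (1 - δ) * ‖u‖ ^ 2 ≤ ‖mulVec' Φ u‖ ^ 2 ∧ ‖mulVec' Φ u‖ ^ 2 ≤ (1 + δ) * ‖u‖ ^ 2)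
    (S : Finset (Fin n)) (hS : S.card ≤ L) (u z : Vec n)
    (hu : ∀ i, i ∉ S → u i = 0) (hz : ∀ i, i ∉ S → z i = 0) :
    inner ℝ u z - δ / 2 * (‖u‖ ^ 2 + ‖z‖ ^ 2) ≤ inner ℝ (mulVec' Φ u) (mulVec' Φ z) := by
  have hp := (hR (u + z) ((Finset.card_le_card (aux_supp (S := S) (by
    intro i hi; simp [hu i hi, hz i hi]))).trans hS)).1
  have hm := (hR (u - z) ((Finset.card_le_card (aux_supp (S := S) (by
    intro i hi; simp [hu i hi, hz i hi]))).trans hS)).2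
  rw [aux_add, norm_add_sq_real, norm_add_sq_real] at hp
  rw [aux_sub, norm_sub_sq_real, norm_sub_sq_real] at hm
  nlinarith

theorem aux_run {m n N : ℕ} {Φ : Matrix (Fin m) (Fin n) ℝ} {y : Vec m} (run : OMPRun Φ y N)
    (k : ℕ) (hk : k ≤ N) : (run.sets k).card ≤ k ∧ (∀ i, i ∉ run.sets k → run.est k i = 0) ∧
      run.res k = y - mulVec' Φ (run.est k) ∧
      ∀ u : Vec n, (∀ i, i ∉ run.sets k → u i = 0) → ‖run.res k‖ ≤ ‖y - mulVec' Φ u‖ := by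
  induction k with
  | zero =>
    have h0 : mulVec' Φ (0 : Vec n) = 0 := by
      ext i; simp [mulVec']
    refine ⟨by simp [run.sets_zero], by simp [run.est_zero], ?_, ?_⟩
    · rw [run.res_zero, run.est_zero, h0, sub_zero]
    · intro u hu
      have : u = 0 := by
        ext i; simpa using hu i (by simp [run.sets_zero])
      rw [this, h0, sub_zero, run.res_zero]
  | succ k ih =>
    have hk' : k < N := hk
    refine ⟨?_, aux_zero (run.est_supp k hk'), run.res_succ k hk', ?_⟩
    · rw [run.sets_succ k hk']
      exact (Finset.card_insert_le _ _).trans (Nat.succ_le_succ (ih hk'.le).1)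
    · intro u hu
      rw [run.res_succ k hk']
      exact run.est_min k hk' u (aux_supp hu)

/-- The numerical endgame. -/
theorem aux_num (t a s w M Z G g V I : ℝ) (ht0 : 0 < t) (ht : t < 1 / 6) (ha : 0 < a)
    (hs : 0 < s) (hZ : 0 ≤ Z) (hG : 0 ≤ G) (hV : 0 ≤ V)
    (hsw : s * w ^ 2 ≤ a ^ 2)
    (hV2 : V ^ 2 ≤ t ^ 2 * (1 + t ^ 2) * a ^ 2)
    (hg : t ^ 2 * g ^ 2 ≤ a ^ 2)
    (hG2 : G ^ 2 ≤ (1 + t ^ 2) * g ^ 2)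
    (hZ2 : (1 - t ^ 2) * Z ^ 2 ≤ (G + 2 * V) ^ 2)
    (hI : a ^ 2 - t / 2 * (a ^ 2 + t ^ 2 * Z ^ 2) - (1 + t ^ 2 / 2) * a * V ≤ I)
    (hM : I ^ 2 ≤ s * a ^ 2 * M ^ 2) :
    (1 - 6 * t) * w ^ 2 ≤ M ^ 2 := by
  have ht2 : t ^ 2 ≤ 1 / 36 := by nlinarith
  have hVa : V ≤ 1.02 * t * a := by
    apply aux_sqle _ (by positivity)
    have : 0 ≤ t ^ 2 * a ^ 2 := by positivity
    nlinarith
  have htG : t * G ≤ 1.02 * a := by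
    apply aux_sqle _ (by positivity)
    have : 0 ≤ t ^ 2 := by positivity
    have h1 : t ^ 2 * G ^ 2 ≤ t ^ 2 * ((1 + t ^ 2) * g ^ 2) := by gcongr
    have h2 : (1 + t ^ 2) * (t ^ 2 * g ^ 2) ≤ (1 + t ^ 2) * a ^ 2 := by gcongr
    have : 0 ≤ a ^ 2 := by positivity
    nlinarith
  have htV : t * V ≤ 0.03 * a := by
    have h1 : t * V ≤ t * (1.02 * t * a) := by gcongr
    have h2 : t ^ 2 * a ≤ 1 / 36 * a := by gcongr
    nlinarith
  have hZa : t ^ 2 * Z ^ 2 ≤ 1.3 * a ^ 2 := by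
    have h1 : (t * (G + 2 * V)) ^ 2 ≤ (1.08 * a) ^ 2 := by
      have : 0 ≤ t * (G + 2 * V) := by positivity
      exact pow_le_pow_left₀ this (by linarith) 2
    have h2 : t ^ 2 * ((1 - t ^ 2) * Z ^ 2) ≤ t ^ 2 * (G + 2 * V) ^ 2 := by gcongr
    have h3 : 0 ≤ t ^ 2 * Z ^ 2 := by positivity
    nlinarith
  have hlow : a ^ 2 * (1 - 3 * t) ≤ I := by
    have h1 : t / 2 * (a ^ 2 + t ^ 2 * Z ^ 2) ≤ t / 2 * (a ^ 2 + 1.3 * a ^ 2) := by gcongr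
    have h2 : (1 + t ^ 2 / 2) * a * V ≤ (1 + (1 / 36) / 2) * a * (1.02 * t * a) := by gcongr
    have h3 : 0 ≤ t * a ^ 2 := by positivity
    nlinarith
  have h4 : (a ^ 2 * (1 - 3 * t)) ^ 2 ≤ I ^ 2 := by
    have : 0 ≤ a ^ 2 * (1 - 3 * t) := mul_nonneg (by positivity) (by linarith)
    gcongr
  have h5 : a ^ 2 * (a ^ 2 * (1 - 6 * t)) ≤ a ^ 2 * (s * M ^ 2) := by
    have : 0 ≤ (a ^ 2) ^ 2 * t ^ 2 := by positivity
    nlinarith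
  have h6 : a ^ 2 * (1 - 6 * t) ≤ s * M ^ 2 := le_of_mul_le_mul_left h5 (by positivity)
  have h7 : s * w ^ 2 * (1 - 6 * t) ≤ a ^ 2 * (1 - 6 * t) :=
    mul_le_mul_of_nonneg_right hsw (by linarith)
  apply le_of_mul_le_mul_left _ hs
  linarith

set_option maxHeartbeats 2000000 in
/-- lower bound on the maximal correlation of the residual:
`‖Φᵀ r^k‖_∞² ≥ (1 − 6τ)(x_τ^k)²` for `0 ≤ k ≤ K − ⌈τK⌉`, `τ = δ^{1/2}`. -/
theorem stmt9 {m n K : ℕ} (Φ : Matrix (Fin m) (Fin n) ℝ) (δ : ℝ)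
    (x : Vec n) (v y : Vec m) (T : Finset (Fin n)) (hTne : T.Nonempty)
    (hsupp : suppF x = T) (hcard : T.card = K) (hK1 : 1 ≤ K)
    (hRIP : RIPConst Φ (2 * K) δ) (h0 : 0 < δ) (h1 : δ < 1)
    (hv : v ≠ 0) (hy : y = mulVec' Φ x + v)
    (hSNR : SNR Φ x v ≥
      (((T ×ˢ T).sup' (hTne.product hTne) fun p => |x p.1| / |x p.2|)) ^ 2
        * δ ^ (-(3 : ℝ) / 2))
    (run : OMPRun Φ y K) :
    ∀ k : ℕ, k ≤ K - ⌈Real.sqrt δ * K⌉₊ →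
      (1 - 6 * Real.sqrt δ) *
          (kthLargest x (T \ run.sets k) ⌈Real.sqrt δ * K⌉₊) ^ 2 ≤
        ‖dualVec Φ (run.res k)‖ ^ 2 := by
  intro k hk
  set t := Real.sqrt δ with htdef
  have ht0 : 0 < t := Real.sqrt_pos.2 h0
  have htsq : t ^ 2 = δ := Real.sq_sqrt h0.le
  by_cases ht : t < 1 / 6
  swap
  · have h6 : (1 - 6 * t) ≤ 0 := by push Not at ht; linarith
    exact (mul_nonpos_of_nonpos_of_nonneg h6 (sq_nonneg _)).trans (sq_nonneg _)
  set s := ⌈t * K⌉₊ with hsdef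
  have hK0 : (0 : ℝ) < K := by exact_mod_cast hK1
  have hs1 : 1 ≤ s := Nat.ceil_pos.2 (by positivity)
  have hsK : t * K ≤ s := Nat.le_ceil _
  have hs0 : (0 : ℝ) < s := by exact_mod_cast hs1
  have hkK : k ≤ K := hk.trans (Nat.sub_le _ _)
  by_cases hsΓ : s ≤ (T \ run.sets k).card
  swap
  · have : kthLargest x (T \ run.sets k) s = 0 := by
      unfold kthLargest
      rw [if_neg (fun h => hsΓ h.2)]
    rw [this]
    have := sq_nonneg ‖dualVec Φ (run.res k)‖
    simpa using this
  obtain ⟨hcardk, hest, hres, hmin⟩ := aux_run run k hkK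
  obtain ⟨A, hAΓ, hAcard, hAge, hAle, j, hjΓ, hj⟩ := aux_kth x (T \ run.sets k) s hs1 hsΓ
  set w := kthLargest x (T \ run.sets k) s with hw
  have hR := hRIP.1.2
  have hxT : ∀ i, i ∈ T ↔ x i ≠ 0 := by
    intro i; rw [← hsupp]; simp [suppF]
  have hjT : j ∈ T := (Finset.mem_sdiff.1 hjΓ).1
  have hw0 : 0 < w := by rw [hj]; exact abs_pos.2 ((hxT j).1 hjT)
  set Γ := T \ run.sets k with hΓ
  set z := x - run.est k with hz
  have hr : run.res k = mulVec' Φ z + v := by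
    rw [hres, hz, aux_sub]
    refine (congrArg (fun q => q - mulVec' Φ (run.est k)) hy).trans ?_
    abel
  have hrest : ∀ (S : Finset (Fin n)) i, i ∉ S → restrict x S i = 0 := by
    intro S i hi; simp [_root_.restrict, hi]
  have hAsq := aux_restrict_sq x A
  have hΓsq := aux_restrict_sq x Γ
  have hsw : s * w ^ 2 ≤ ‖restrict x A‖ ^ 2 := by
    rw [hAsq, ← hAcard, ← nsmul_eq_mul]
    apply Finset.card_nsmul_le_sum
    intro i hi
    exact pow_le_pow_left₀ hw0.le (hAge i hi) 2
  have ha0 : 0 < ‖restrict x A‖ := by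
    by_contra hc
    have : ‖restrict x A‖ = 0 := le_antisymm (not_lt.1 hc) (norm_nonneg _)
    rw [this] at hsw
    have : (0:ℝ) < s * w ^ 2 := by positivity
    linarith
  have hΓT : Γ ⊆ T := Finset.sdiff_subset
  have hcardT : ∀ S ⊆ T, (S.card : ℝ) ≤ K := by
    intro S hS
    rw [← hcard]; exact_mod_cast Finset.card_le_card hS
  -- signal bound on Γ
  have hKw : t * (K * w ^ 2) ≤ ‖restrict x A‖ ^ 2 := by
    refine le_trans ?_ hsw
    rw [← mul_assoc]; gcongr
  have hg : t ^ 2 * ‖restrict x Γ‖ ^ 2 ≤ ‖restrict x A‖ ^ 2 := by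
    have h1 : ∑ i ∈ Γ \ A, |x i| ^ 2 ≤ K * w ^ 2 := by
      refine (Finset.sum_le_card_nsmul _ _ (w ^ 2) ?_).trans ?_
      · intro i hi
        exact pow_le_pow_left₀ (abs_nonneg _) (hAle i hi) 2
      · rw [nsmul_eq_mul]
        exact mul_le_mul_of_nonneg_right (hcardT _ (Finset.sdiff_subset.trans hΓT)) (sq_nonneg w)
    have h2 : ‖restrict x Γ‖ ^ 2 ≤ K * w ^ 2 + ‖restrict x A‖ ^ 2 := by
      rw [hΓsq, hAsq, ← Finset.sum_sdiff hAΓ]; linarith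
    have h3 : t ^ 2 * ‖restrict x Γ‖ ^ 2 ≤ t ^ 2 * (K * w ^ 2 + ‖restrict x A‖ ^ 2) := by gcongr
    have h4 : t * (t * (K * w ^ 2)) ≤ t * ‖restrict x A‖ ^ 2 := by gcongr
    have h5 : 0 ≤ ‖restrict x A‖ ^ 2 := sq_nonneg _
    have h6 : (t ^ 2 + t) * ‖restrict x A‖ ^ 2 ≤ 1 * ‖restrict x A‖ ^ 2 := by
      gcongr; nlinarith
    nlinarith
  -- noise bound
  have hVsq : ‖v‖ ^ 2 ≤ t ^ 2 * (1 + t ^ 2) * ‖restrict x A‖ ^ 2 := by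
    set κ := (T ×ˢ T).sup' (hTne.product hTne) fun p => |x p.1| / |x p.2| with hκ
    have hκle : ∀ i ∈ T, |x i| ≤ κ * w := by
      intro i hi
      have h := Finset.le_sup' (fun p : Fin n × Fin n => |x p.1| / |x p.2|)
        (Finset.mk_mem_product hi hjT)
      rw [← hκ] at h
      simp only at h
      rw [← hj] at h
      exact (div_le_iff₀ hw0).1 h
    have hκ0 : 0 < κ := by
      have h := hκle j hjT
      rw [← hj] at h
      by_contra hc
      nlinarith
    have hv0 : 0 < ‖v‖ ^ 2 := by positivity
    have hδ : δ ^ (-(3 : ℝ) / 2) = (t ^ 3)⁻¹ := by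
      rw [htdef, Real.sqrt_eq_rpow, ← Real.rpow_natCast, ← Real.rpow_mul h0.le,
        ← Real.rpow_neg h0.le]
      norm_num
    rw [hδ, SNR, ge_iff_le, le_div_iff₀ hv0, ← div_eq_mul_inv, div_mul_eq_mul_div,
      div_le_iff₀ (by positivity)] at hSNR
    have hx2 := (hR x (by rw [hsupp, hcard]; omega)).2
    have hx3 : ‖x‖ ^ 2 ≤ K * (κ * w) ^ 2 := by
      rw [EuclideanSpace.real_norm_sq_eq,
        ← Finset.sum_subset (Finset.subset_univ T) (fun i _ hi => by
          have : x i = 0 := by by_contra hc; exact hi ((hxT i).2 hc)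
          simp [this])]
      refine (Finset.sum_le_card_nsmul _ _ ((κ * w) ^ 2) ?_).trans ?_
      · intro i hi
        rw [← sq_abs]
        exact pow_le_pow_left₀ (abs_nonneg _) (hκle i hi) 2
      · rw [nsmul_eq_mul, hcard]
    have h1 : κ ^ 2 * ‖v‖ ^ 2 ≤ κ ^ 2 * (t ^ 2 * (1 + t ^ 2) * (t * (K * w ^ 2))) := by
      calc κ ^ 2 * ‖v‖ ^ 2 ≤ ‖mulVec' Φ x‖ ^ 2 * t ^ 3 := hSNR
        _ ≤ ((1 + δ) * (K * (κ * w) ^ 2)) * t ^ 3 := by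
            gcongr
            refine hx2.trans ?_
            gcongr
        _ = _ := by rw [← htsq]; ring
    have h2 := le_of_mul_le_mul_left h1 (by positivity)
    refine h2.trans ?_
    gcongr
  -- RIP bounds
  have hScard : (T ∪ run.sets k).card ≤ 2 * K := by
    refine (Finset.card_union_le _ _).trans ?_
    omega
  have hzS : ∀ i, i ∉ T ∪ run.sets k → z i = 0 := by
    intro i hi
    rw [Finset.mem_union, not_or] at hi
    have h1 : x i = 0 := by by_contra hc; exact hi.1 ((hxT i).2 hc)
    simp [hz, h1, hest i hi.2]
  have hAT : A ⊆ T := hAΓ.trans hΓT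
  have hAS : ∀ i, i ∉ T ∪ run.sets k → restrict x A i = 0 := by
    intro i hi
    exact hrest A i fun h => hi (Finset.mem_union_left _ (hAT h))
  have hcardsupp : ∀ S ⊆ T, (suppF (restrict x S)).card ≤ 2 * K := by
    intro S hS
    refine (Finset.card_le_card ((aux_supp (hrest S)).trans hS)).trans ?_
    omega
  have hG2 := (hR _ (hcardsupp Γ hΓT)).2
  have hA2 := (hR _ (hcardsupp A hAT)).2
  have hZ2 := (hR z ((Finset.card_le_card (aux_supp hzS)).trans hScard)).1
  rw [← htsq] at hG2 hA2 hZ2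
  have hresle : ‖run.res k‖ ≤ ‖mulVec' Φ (restrict x Γ)‖ + ‖v‖ := by
    have h := hmin (x - restrict x Γ) (by
      intro i hi
      by_cases hiT : i ∈ T
      · simp [_root_.restrict, hΓ, hiT, hi]
      · have h1 : x i = 0 := by by_contra hc; exact hiT ((hxT i).2 hc)
        simp [_root_.restrict, h1])
    refine h.trans ?_
    have : y - mulVec' Φ (x - restrict x Γ) = mulVec' Φ (restrict x Γ) + v := by
      rw [hy, aux_sub]; abel
    rw [this]
    exact norm_add_le _ _
  have hΦz : ‖mulVec' Φ z‖ ≤ ‖mulVec' Φ (restrict x Γ)‖ + 2 * ‖v‖ := by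
    have : mulVec' Φ z = run.res k - v := by rw [hr]; abel
    rw [this]
    have := norm_sub_le (run.res k) v
    linarith
  have hZ3 : (1 - t ^ 2) * ‖z‖ ^ 2 ≤ (‖mulVec' Φ (restrict x Γ)‖ + 2 * ‖v‖) ^ 2 :=
    hZ2.trans (pow_le_pow_left₀ (norm_nonneg _) hΦz 2)
  -- inner products
  have hAz : inner ℝ (restrict x A) z = ‖restrict x A‖ ^ 2 := by
    rw [aux_inner, EuclideanSpace.real_norm_sq_eq]
    refine Finset.sum_congr rfl fun i _ => ?_
    by_cases hi : i ∈ A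
    · have h1 := hest i (Finset.mem_sdiff.1 (hAΓ hi)).2
      simp [_root_.restrict, hi, hz, h1]; ring
    · simp [_root_.restrict, hi]
  have hcross : ‖restrict x A‖ ^ 2 - t / 2 * (‖restrict x A‖ ^ 2 + t ^ 2 * ‖z‖ ^ 2)
      ≤ inner ℝ (mulVec' Φ (restrict x A)) (mulVec' Φ z) := by
    have h := aux_rip Φ δ hR _ hScard (restrict x A) (t • z) hAS (by
      intro i hi; simp [hzS i hi])
    rw [aux_smul, inner_smul_right, inner_smul_right, hAz, norm_smul, Real.norm_eq_abs,
      abs_of_pos ht0, ← htsq] at h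
    have h' : t * (‖restrict x A‖ ^ 2 - t / 2 * (‖restrict x A‖ ^ 2 + t ^ 2 * ‖z‖ ^ 2))
        ≤ t * inner ℝ (mulVec' Φ (restrict x A)) (mulVec' Φ z) := by
      refine le_trans (le_of_eq ?_) h
      ring
    exact le_of_mul_le_mul_left h' ht0
  have hnoise : -((1 + t ^ 2 / 2) * ‖restrict x A‖ * ‖v‖)
      ≤ inner ℝ (mulVec' Φ (restrict x A)) v := by
    have h1 := abs_real_inner_le_norm (mulVec' Φ (restrict x A)) v
    have h2 : ‖mulVec' Φ (restrict x A)‖ ≤ (1 + t ^ 2 / 2) * ‖restrict x A‖ := by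
      apply aux_sqle _ (by positivity)
      refine hA2.trans ?_
      rw [mul_pow]
      gcongr
      nlinarith [sq_nonneg (t ^ 2)]
    have h3 : ‖mulVec' Φ (restrict x A)‖ * ‖v‖ ≤ (1 + t ^ 2 / 2) * ‖restrict x A‖ * ‖v‖ := by
      gcongr
    have h4 := neg_abs_le (inner ℝ (mulVec' Φ (restrict x A)) v : ℝ)
    linarith
  have hM : (inner ℝ (mulVec' Φ (restrict x A)) (run.res k) : ℝ) ^ 2
      ≤ s * ‖restrict x A‖ ^ 2 * ‖dualVec Φ (run.res k)‖ ^ 2 := by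
    have h1 : (inner ℝ (mulVec' Φ (restrict x A)) (run.res k) : ℝ)
        = ∑ i ∈ A, x i * dot (col Φ i) (run.res k) := by
      rw [aux_innerΦ]
      simp [_root_.restrict, ite_mul, Finset.sum_ite_mem]
    rw [h1]
    refine (Finset.sum_mul_sq_le_sq_mul_sq _ _ _).trans ?_
    have h2 : ∑ i ∈ A, dot (col Φ i) (run.res k) ^ 2 ≤ s * ‖dualVec Φ (run.res k)‖ ^ 2 := by
      rw [← hAcard, ← nsmul_eq_mul]
      apply Finset.sum_le_card_nsmul
      intro i _
      rw [← sq_abs]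
      exact pow_le_pow_left₀ (abs_nonneg _) (norm_le_pi_norm (dualVec Φ (run.res k)) i) 2
    have h3 : ∑ i ∈ A, x i ^ 2 = ‖restrict x A‖ ^ 2 := by
      rw [hAsq]; simp
    rw [h3]
    calc _ ≤ ‖restrict x A‖ ^ 2 * (s * ‖dualVec Φ (run.res k)‖ ^ 2) := by gcongr
      _ = _ := by ring
  refine aux_num t ‖restrict x A‖ s w _ ‖z‖ ‖mulVec' Φ (restrict x Γ)‖ ‖restrict x Γ‖ ‖v‖
    (inner ℝ (mulVec' Φ (restrict x A)) (run.res k)) ht0 ht ha0 hs0 (norm_nonneg _)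
    (norm_nonneg _) (norm_nonneg _) hsw hVsq hg hG2 hZ3 ?_ hM
  rw [hr, inner_add_right]
  linarith


end
end

section
/- Let Φ ∈ ℝ^{m×n} have restricted isometry constant δ_{K+1} < 1/(√K + 1), let x ∈ ℝ^n be K-sparse with support T, |T| = K ≥ 1, and let y = Φx + v with v ≠ 0. If √SNR > (√K + 1)(1 + δ_{K+1}) / (1 − (√K + 1)δ_{K+1}), then every run of OMP applied to (Φ, y) selects a correct index at the first iteration, i.e., t^1 ∈ T. -/
noncomputable section
open Finset

lemma mulVec'_add_smul {m n : ℕ} (Φ : Matrix (Fin m) (Fin n) ℝ) (x e : Vec n) (t : ℝ) :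
    mulVec' Φ (x + t • e) = mulVec' Φ x + t • mulVec' Φ e := by
  ext i
  simp only [mulVec', PiLp.add_apply, PiLp.smul_apply, smul_eq_mul, Finset.mul_sum,
    ← Finset.sum_add_distrib]
  refine Finset.sum_congr rfl fun j _ => by ring

lemma mulVec'_single {m n : ℕ} (Φ : Matrix (Fin m) (Fin n) ℝ) (j : Fin n) :
    mulVec' Φ (EuclideanSpace.single j 1) = col Φ j := by
  ext i
  simp [mulVec', col]

lemma dot_eq_inner {n : ℕ} (u v : Vec n) : dot u v = inner ℝ u v := by
  simp only [dot, PiLp.inner_apply]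
  refine Finset.sum_congr rfl fun j _ => by simp [mul_comm]

lemma inner_mulVec' {m n : ℕ} (Φ : Matrix (Fin m) (Fin n) ℝ) (x : Vec n) (y : Vec m) :
    inner ℝ (mulVec' Φ x) y = ∑ i, x i * dot (col Φ i) y := by
  rw [← dot_eq_inner]
  simp only [dot, mulVec', col, Finset.sum_mul, Finset.mul_sum]
  rw [Finset.sum_comm]
  refine Finset.sum_congr rfl fun j _ => Finset.sum_congr rfl fun i _ => by ring

/-- SNR condition under which OMP selects a correct index at the
first iteration. -/
theorem stmt11 {m n K : ℕ} (Φ : Matrix (Fin m) (Fin n) ℝ) (δ : ℝ)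
    (x : Vec n) (v y : Vec m) (T : Finset (Fin n))
    (hsupp : suppF x = T) (hcard : T.card = K) (hK1 : 1 ≤ K)
    (hRIP : RIPConst Φ (K + 1) δ) (hδ : δ < 1 / (Real.sqrt K + 1))
    (hv : v ≠ 0) (hy : y = mulVec' Φ x + v)
    (hSNR : Real.sqrt (SNR Φ x v) >
      (Real.sqrt K + 1) * (1 + δ) / (1 - (Real.sqrt K + 1) * δ))
    (run : OMPRun Φ y 1) :
    run.idx 1 ∈ T := by
  by_contra hj
  have hmax := run.idx_max 0 one_pos
  simp only [run.sets_zero, run.res_zero, Finset.notMem_empty, not_false_eq_true,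
    forall_const, zero_add] at hmax
  generalize run.idx 1 = j at hj hmax
  obtain ⟨⟨hδ0, hrip⟩, -⟩ := hRIP
  set s := Real.sqrt K with hs
  have hs0 : 0 ≤ s := Real.sqrt_nonneg _
  have hxj : x j = 0 := by
    by_contra h
    exact hj (by rw [← hsupp]; simp [suppF, h])
  have hx0 : x ≠ 0 := by
    rintro rfl
    have : T = ∅ := by rw [← hsupp]; simp [suppF]
    simp [this] at hcard
    omega
  have hX : 0 < ‖x‖ := norm_pos_iff.mpr hx0
  have hε : 0 < ‖v‖ := norm_pos_iff.mpr hv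
  set X := ‖x‖ with hXdef
  set ε := ‖v‖ with hεdef
  set a := ‖mulVec' Φ x‖ with ha
  have ha0 : 0 ≤ a := norm_nonneg _
  set e : Vec n := EuclideanSpace.single j 1 with he
  have hsq : √(1 + δ) ^ 2 = 1 + δ := Real.sq_sqrt (by linarith)
  set q := √(1 + δ) with hq
  have hq0 : 0 < q := Real.sqrt_pos.mpr (by linarith)
  have hD : 0 < 1 - (s + 1) * δ := by
    rw [lt_div_iff₀ (by linarith)] at hδ
    linarith
  -- RIP on `x`
  have hripx := hrip x (by rw [hsupp, hcard]; omega)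
  have haX : a ≤ q * X := by
    refine abs_le_of_sq_le_sq' ?_ (by positivity) |>.2
    rw [mul_pow, hsq]; exact hripx.2
  -- column norm
  have hc : ‖col Φ j‖ ≤ q := by
    have h := (hrip e (by
      have : suppF e ⊆ {j} := by
        intro i hi
        by_contra h
        simp [suppF, he] at hi h
        exact h hi
      exact (Finset.card_le_card this).trans (by simp))).2
    rw [mulVec'_single] at h
    refine abs_le_of_sq_le_sq' ?_ hq0.le |>.2
    rw [hsq]
    simpa [he] using h
  -- RIP on `x + t e`
  have hrt : ∀ t : ℝ, t ^ 2 = X ^ 2 →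
      (1 - δ) * (2 * X ^ 2) ≤
        a ^ 2 + 2 * t * inner ℝ (mulVec' Φ x) (col Φ j) + X ^ 2 * ‖col Φ j‖ ^ 2 ∧
      a ^ 2 + 2 * t * inner ℝ (mulVec' Φ x) (col Φ j) + X ^ 2 * ‖col Φ j‖ ^ 2 ≤
        (1 + δ) * (2 * X ^ 2) := by
    intro t ht
    have h := hrip (x + t • e) (by
      have : suppF (x + t • e) ⊆ insert j T := by
        intro i hi
        by_contra h
        simp only [Finset.mem_insert, not_or] at h
        have hxi : x i = 0 := by
          by_contra hne
          exact h.2 (by rw [← hsupp]; simp [suppF, hne])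
        simp [suppF, he, hxi] at hi
        exact h.1 hi.1
      exact (Finset.card_le_card this).trans ((Finset.card_insert_le _ _).trans (by omega)))
    have h1 : ‖x + t • e‖ ^ 2 = 2 * X ^ 2 := by
      rw [norm_add_sq_real, norm_smul, mul_pow, inner_smul_right]
      have : inner ℝ x e = x j := by rw [he, EuclideanSpace.inner_single_right]; simp
      rw [this, hxj]
      simp [he, ht]; ring
    have h2 : ‖mulVec' Φ (x + t • e)‖ ^ 2 =
        a ^ 2 + 2 * t * inner ℝ (mulVec' Φ x) (col Φ j) + X ^ 2 * ‖col Φ j‖ ^ 2 := by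
      rw [mulVec'_add_smul, mulVec'_single, norm_add_sq_real, norm_smul, mul_pow,
        inner_smul_right, Real.norm_eq_abs, sq_abs, ht]
      ring
    rw [h1, h2] at h
    exact h
  have hb : |inner ℝ (mulVec' Φ x) (col Φ j)| ≤ δ * X := by
    have h1 := hrt X rfl
    have h2 := hrt (-X) (by ring)
    rw [abs_le]
    constructor <;> refine le_of_mul_le_mul_left ?_ hX <;> nlinarith
  have hM : |dot (col Φ j) y| ≤ δ * X + q * ε := by
    rw [dot_eq_inner, hy, inner_add_right, real_inner_comm]
    refine (abs_add_le _ _).trans (add_le_add hb ?_)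
    exact (abs_real_inner_le_norm _ _).trans (mul_le_mul_of_nonneg_right hc hε.le)
  have hl1 : ∑ i, |x i| ≤ s * X := by
    have h0 : ∑ i, |x i| = ∑ i ∈ T, |x i| := by
      symm
      refine Finset.sum_subset (Finset.subset_univ _) fun i _ hi => ?_
      by_contra hne
      exact hi (by rw [← hsupp]; simp [suppF] at hne ⊢; exact hne)
    have h1 : (∑ i ∈ T, |x i|) ^ 2 ≤ K * ∑ i ∈ T, |x i| ^ 2 := by
      rw [← hcard]; exact sq_sum_le_card_mul_sum_sq
    have h2 : ∑ i ∈ T, |x i| ^ 2 ≤ X ^ 2 := by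
      rw [hXdef, EuclideanSpace.norm_sq_eq]
      simp only [Real.norm_eq_abs]
      exact Finset.sum_le_sum_of_subset_of_nonneg (Finset.subset_univ _) fun _ _ _ => by positivity
    refine abs_le_of_sq_le_sq' ?_ (by positivity) |>.2
    rw [h0, mul_pow, hs, Real.sq_sqrt (by positivity)]
    exact h1.trans (mul_le_mul_of_nonneg_left h2 (by positivity))
  have hup : inner ℝ (mulVec' Φ x) y ≤ (s * X) * (δ * X + q * ε) := by
    rw [inner_mulVec']
    calc ∑ i, x i * dot (col Φ i) y ≤ ∑ i, |x i| * (δ * X + q * ε) := by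
          refine Finset.sum_le_sum fun i _ => (le_abs_self _).trans ?_
          rw [abs_mul]
          exact mul_le_mul_of_nonneg_left ((hmax i).trans hM) (abs_nonneg _)
      _ = (∑ i, |x i|) * (δ * X + q * ε) := by rw [Finset.sum_mul]
      _ ≤ _ := mul_le_mul_of_nonneg_right hl1 (by positivity)
  have hlow : (1 - δ) * X ^ 2 - q * X * ε ≤ inner ℝ (mulVec' Φ x) y := by
    rw [hy, inner_add_right, real_inner_self_eq_norm_sq]
    have h1 := (abs_le.mp (abs_real_inner_le_norm (mulVec' Φ x) v)).1
    have h2 : a * ε ≤ q * X * ε := mul_le_mul_of_nonneg_right haX hε.le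
    have h3 := hripx.1
    linarith
  have hS : Real.sqrt (SNR Φ x v) = a / ε := by
    rw [SNR, ← div_pow, Real.sqrt_sq (by positivity)]
  rw [hS, gt_iff_lt, div_lt_div_iff₀ hD hε, ← hsq] at hSNR
  have h5 : (s + 1) * q * ε < X * (1 - (s + 1) * δ) := by
    refine lt_of_mul_lt_mul_left ?_ hq0.le
    have := mul_le_mul_of_nonneg_right haX hD.le
    linarith
  have h6 := mul_lt_mul_of_pos_left h5 hX
  linarith

end
end

section
/- Let Φ ∈ ℝ^{m×n} have restricted isometry constant δ_{K+1} of order K+1, let x ∈ ℝ^n be K-sparse with support T, |T| = K ≥ 1, and let y = Φx + v with v ≠ 0. Then for every subset S ⊆ T with |S| = k ≤ K, the restriction of x to T\S satisfies ‖x_{T\S}‖₂ ≥ √((K − k)/(K(1 + δ_{K+1}))) · √(MAR · SNR) · ‖v‖₂. -/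
noncomputable section
open Finset

/-- lower bound on `‖x_{T\S}‖` in terms of `MAR`, `SNR` and `‖v‖`. -/
theorem stmt15 {m n K k : ℕ} (Φ : Matrix (Fin m) (Fin n) ℝ) (δ : ℝ)
    (x : Vec n) (v y : Vec m) (T : Finset (Fin n)) (hTne : T.Nonempty)
    (hsupp : suppF x = T) (hcard : T.card = K) (hK1 : 1 ≤ K)
    (hRIP : RIPConst Φ (K + 1) δ)
    (hv : v ≠ 0) (hy : y = mulVec' Φ x + v)
    (S : Finset (Fin n)) (hS : S ⊆ T) (hk : S.card = k) :
    Real.sqrt (((K : ℝ) - k) / (K * (1 + δ))) *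
        Real.sqrt (((T.inf' hTne fun j => |x j| ^ 2) / (‖x‖ ^ 2 / K)) * SNR Φ x v) *
        ‖v‖ ≤
      ‖restrict x (T \ S)‖ := by
  obtain ⟨⟨hδ, hR⟩, -⟩ := hRIP
  have hub := (hR x (by rw [hsupp, hcard]; omega)).2
  set M := T.inf' hTne fun j => |x j| ^ 2 with hM
  have hM0 : 0 ≤ M := by
    rw [hM, Finset.le_inf'_iff]
    intro i _
    positivity
  have hkK : (k : ℝ) ≤ K := by
    rw [← hk, ← hcard]
    exact_mod_cast Finset.card_le_card hS
  have hcardTS : (((T \ S).card : ℕ) : ℝ) = K - k := by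
    rw [Finset.card_sdiff_of_subset hS, Nat.cast_sub (Finset.card_le_card hS), hk, hcard]
  have hlow : ((K : ℝ) - k) * M ≤ ‖restrict x (T \ S)‖ ^ 2 := by
    rw [EuclideanSpace.norm_sq_eq]
    calc ((K : ℝ) - k) * M = ∑ i ∈ T \ S, M := by
          rw [Finset.sum_const, nsmul_eq_mul, hcardTS]
      _ ≤ ∑ i ∈ T \ S, ‖restrict x (T \ S) i‖ ^ 2 := by
          apply Finset.sum_le_sum
          intro i hi
          have h1 : restrict x (T \ S) i = x i := by simp only [_root_.restrict, if_pos hi]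
          rw [h1, Real.norm_eq_abs]
          exact Finset.inf'_le (fun j => |x j| ^ 2) (Finset.mem_sdiff.mp hi).1
      _ ≤ ∑ i, ‖restrict x (T \ S) i‖ ^ 2 :=
          Finset.sum_le_sum_of_subset_of_nonneg (Finset.subset_univ _)
            (fun i _ _ => by positivity)
  have hx : x ≠ 0 := by
    rintro rfl
    obtain ⟨i, hi⟩ := hTne
    rw [← hsupp] at hi
    simp [suppF] at hi
  have hxn : 0 < ‖x‖ := norm_pos_iff.mpr hx
  have hvn : 0 < ‖v‖ := norm_pos_iff.mpr hv
  have hK : (0 : ℝ) < K := by exact_mod_cast hK1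
  have hSNR : 0 ≤ SNR Φ x v := by unfold SNR; positivity
  have hd : 0 ≤ (K : ℝ) - k := by linarith
  have h1δ : 0 < 1 + δ := by linarith
  refine abs_le_of_sq_le_sq' ?_ (norm_nonneg _) |>.2
  rw [mul_pow, mul_pow, Real.sq_sqrt (by positivity), Real.sq_sqrt (by positivity)]
  refine le_trans ?_ hlow
  have e : ((K : ℝ) - k) / (K * (1 + δ)) * (M / (‖x‖ ^ 2 / K) * SNR Φ x v) * ‖v‖ ^ 2
      = (((K : ℝ) - k) * M) * (‖mulVec' Φ x‖ ^ 2 / ((1 + δ) * ‖x‖ ^ 2)) := by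
    unfold SNR
    field_simp
  rw [e]
  exact mul_le_of_le_one_right (by positivity) ((div_le_one (by positivity)).mpr hub)

end
end

section
/- Let Φ ∈ ℝ^{m×n} have restricted isometry constant δ_K < 1 of order K, let x ∈ ℝ^n be K-sparse with support T, |T| = K, and let S ⊊ T be a proper subset such that Φ_S has full column rank. Then ‖Φᵀ_{T\S} P⊥_S Φ x‖₂ ≥ (1 − δ_K)·‖x_{T\S}‖₂, where Φ_A denotes the submatrix of Φ with columns indexed by A, P_S = Φ_S Φ_S^† is the orthogonal projection onto the column span of Φ_S, P⊥_S = I − P_S, and x_{T\S} is the restriction of x to the indices in T\S. -/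
noncomputable section
open Finset

lemma mulVec'_eq_sum {m n : ℕ} (Φ : Matrix (Fin m) (Fin n) ℝ) (x : Vec n) :
    mulVec' Φ x = ∑ j, x j • col Φ j := by
  ext i
  simp [mulVec', col, mul_comm]

lemma exists_coeff {m n : ℕ} (Φ : Matrix (Fin m) (Fin n) ℝ) (S : Finset (Fin n)) (p : Vec m)
    (hp : p ∈ Submodule.span ℝ (col Φ '' (S : Set (Fin n)))) :
    ∃ z : Vec n, (∀ i, i ∉ S → z i = 0) ∧ mulVec' Φ z = p := by
  induction hp using Submodule.span_induction with
  | mem y hy =>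
    obtain ⟨j, hj, rfl⟩ := hy
    refine ⟨EuclideanSpace.single j 1, ?_, ?_⟩
    · intro i hi
      have : i ≠ j := by rintro rfl; exact hi (by simpa using hj)
      simp [this]
    · ext i
      simp [mulVec', col]
  | zero => exact ⟨0, by simp, by ext i; simp [mulVec']⟩
  | add a b _ _ ha hb =>
    obtain ⟨z, hz, rfl⟩ := ha
    obtain ⟨w, hw, rfl⟩ := hb
    refine ⟨z + w, fun i hi => by simp [hz i hi, hw i hi], ?_⟩
    simp [mulVec'_eq_sum, add_smul, Finset.sum_add_distrib]
  | smul c a _ ha =>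
    obtain ⟨z, hz, rfl⟩ := ha
    refine ⟨c • z, fun i hi => by simp [hz i hi], ?_⟩
    simp [mulVec'_eq_sum, mul_smul, Finset.smul_sum]

/-- `‖Φᵀ_{T\S} P⊥_S Φx‖ ≥ (1 − δ_K)‖x_{T\S}‖` for `S ⊊ T` with
`Φ_S` of full column rank. -/
theorem stmt16 {m n K : ℕ} (Φ : Matrix (Fin m) (Fin n) ℝ) (δ : ℝ)
    (x : Vec n) (T S : Finset (Fin n))
    (hsupp : suppF x = T) (hcard : T.card = K)
    (hRIP : RIPConst Φ K δ) (hδ : δ < 1)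
    (hS : S ⊂ T)
    (hrank : LinearIndependent ℝ (fun j : {i // i ∈ S} => col Φ (j : Fin n))) :
    (1 - δ) * ‖restrict x (T \ S)‖ ≤
      ‖colDots Φ (T \ S) (perpProj Φ S (mulVec' Φ x))‖ := by
  obtain ⟨hδ0, hrip⟩ := hRIP.1
  set V := Submodule.span ℝ (col Φ '' (S : Set (Fin n))) with hV
  obtain ⟨z, hz, hzp⟩ := exists_coeff Φ S
    (V.orthogonalProjectionOnto (mulVec' Φ x) : Vec m) (Submodule.coe_mem _)
  set r := perpProj Φ S (mulVec' Φ x) with hr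
  have hru : r = mulVec' Φ (x - z) := by
    have h1 : r = mulVec' Φ x - mulVec' Φ z := by rw [hzp]; rfl
    rw [h1]
    simp [mulVec'_eq_sum, sub_smul, Finset.sum_sub_distrib]
  have hperp : ∀ i ∈ S, inner ℝ (col Φ i) r = 0 := by
    intro i hi
    have hmem : col Φ i ∈ V := Submodule.subset_span ⟨i, by simpa using hi, rfl⟩
    exact Submodule.inner_right_of_mem_orthogonal hmem
      (Submodule.sub_starProjection_mem_orthogonal (K := V) (mulVec' Φ x))
  have hxT : ∀ i, i ∉ T → x i = 0 := by
    intro i hi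
    by_contra h
    exact hi (hsupp ▸ (by simp [suppF, h]))
  have huT : suppF (x - z) ⊆ T := by
    intro i hi
    by_contra h
    have h2 : i ∉ S := fun h' => h (hS.1 h')
    exact (Finset.mem_filter.1 hi).2 (by simp [hxT i h, hz i h2])
  have hlow := (hrip (x - z) (hcard ▸ Finset.card_le_card huT)).1
  rw [← hru] at hlow
  have hle : ‖restrict x (T \ S)‖ ^ 2 ≤ ‖x - z‖ ^ 2 := by
    rw [EuclideanSpace.norm_sq_eq, EuclideanSpace.norm_sq_eq]
    apply Finset.sum_le_sum
    intro i _
    by_cases h : i ∈ T \ S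
    · have := hz i (Finset.mem_sdiff.1 h).2
      simp only [_root_.restrict, h, if_true, PiLp.sub_apply, this, sub_zero]
      exact le_rfl
    · simp only [_root_.restrict, h, if_false, norm_zero]
      rw [zero_pow two_ne_zero]
      positivity
  have heq : ‖r‖ ^ 2 = inner ℝ (restrict x (T \ S)) (colDots Φ (T \ S) r) := by
    rw [← dot_eq_inner, ← real_inner_self_eq_norm_sq]
    nth_rewrite 1 [hru]
    rw [mulVec'_eq_sum, sum_inner, dot]
    apply Finset.sum_congr rfl
    intro i _
    rw [real_inner_smul_left]
    by_cases hiS : i ∈ S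
    · simp [hperp i hiS, _root_.restrict, hiS]
    · by_cases hiT : i ∈ T
      · simp [_root_.restrict, colDots, hiS, hiT, hz i hiS, dot_eq_inner]
      · simp [_root_.restrict, hiS, hiT, hz i hiS, hxT i hiT]
  have hcs := real_inner_le_norm (restrict x (T \ S)) (colDots Φ (T \ S) r)
  rw [← heq] at hcs
  have hmul := mul_le_mul_of_nonneg_left hle (sub_nonneg.2 hδ.le)
  rcases (norm_nonneg (restrict x (T \ S))).eq_or_lt with h0 | hpos
  · rw [← h0, mul_zero]
    exact norm_nonneg _
  · refine le_of_mul_le_mul_left ?_ hpos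
    nlinarith

end
end

section
/- Let Φ ∈ ℝ^{m×n} have restricted isometry constant δ_K < 1 of order K, and let S₁, S₂ ⊆ {1,…,n} be disjoint index sets with |S₁| + |S₂| ≤ K such that Φ_{S₂} has full column rank. Then for every vector w ∈ ℝ^m, ‖Φᵀ_{S₁} P⊥_{S₂} w‖₂ ≤ √(1 + δ_K)·‖w‖₂, where P_{S₂} = Φ_{S₂} Φ_{S₂}^† is the orthogonal projection onto the column span of Φ_{S₂} and P⊥_{S₂} = I − P_{S₂}. -/
noncomputable section
open Finset

lemma norm_perpProj_le {m n : ℕ} (Φ : Matrix (Fin m) (Fin n) ℝ) (S : Finset (Fin n))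
    (w : Vec m) : ‖perpProj Φ S w‖ ≤ ‖w‖ := by
  unfold perpProj
  set U := Submodule.span ℝ (col Φ '' (S : Set (Fin n))) with hU
  have h := U.norm_sq_eq_add_norm_sq_starProjection w
  have e : w - (U.orthogonalProjectionOnto w : Vec m) = Uᗮ.starProjection w := by
    rw [Submodule.starProjection_orthogonal_val]
    rfl
  rw [e]
  exact Submodule.norm_starProjection_apply_le _ w

lemma colDots_norm_sq {m n : ℕ} (Φ : Matrix (Fin m) (Fin n) ℝ) (S : Finset (Fin n))
    (z : Vec m) : ‖colDots Φ S z‖ ^ 2 = inner ℝ (mulVec' Φ (colDots Φ S z)) z := by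
  have h1 : ‖colDots Φ S z‖ ^ 2 = ∑ i, (colDots Φ S z) i * (∑ k, Φ k i * z k) := by
    rw [EuclideanSpace.real_norm_sq_eq]
    refine Finset.sum_congr rfl fun i _ => ?_
    by_cases hi : i ∈ S <;> simp [colDots, hi, dot, col, sq]
  rw [h1, PiLp.inner_apply]
  simp only [mulVec', RCLike.inner_apply, conj_trivial, Finset.mul_sum]
  rw [Finset.sum_comm]
  refine Finset.sum_congr rfl fun i _ => Finset.sum_congr rfl fun j _ => ?_
  ring

/-- `‖Φᵀ_{S₁} P⊥_{S₂} w‖ ≤ √(1 + δ_K)‖w‖` for disjoint `S₁, S₂`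
with `|S₁| + |S₂| ≤ K` and `Φ_{S₂}` of full column rank. -/
theorem stmt17 {m n K : ℕ} (Φ : Matrix (Fin m) (Fin n) ℝ) (δ : ℝ)
    (S₁ S₂ : Finset (Fin n))
    (hRIP : RIPConst Φ K δ) (hδ : δ < 1)
    (hdisj : Disjoint S₁ S₂) (hcard : S₁.card + S₂.card ≤ K)
    (hrank : LinearIndependent ℝ (fun j : {i // i ∈ S₂} => col Φ (j : Fin n)))
    (w : Vec m) :
    ‖colDots Φ S₁ (perpProj Φ S₂ w)‖ ≤ Real.sqrt (1 + δ) * ‖w‖ := by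
  obtain ⟨h0, hu⟩ := hRIP.1
  set z := perpProj Φ S₂ w with hz
  set u := colDots Φ S₁ z with hu'
  have hsupp : (suppF u).card ≤ K := by
    refine le_trans (Finset.card_le_card (t := S₁) ?_) (by omega)
    intro i hi
    by_contra hn
    simp [suppF, hu', colDots, hn] at hi
  have h2 := (hu u hsupp).2
  have h3 : ‖mulVec' Φ u‖ ≤ Real.sqrt (1 + δ) * ‖u‖ := by
    refine abs_le_of_sq_le_sq' ?_ (by positivity) |>.2
    rw [mul_pow, Real.sq_sqrt (by linarith)]
    exact h2
  have h4 : ‖u‖ ^ 2 ≤ ‖mulVec' Φ u‖ * ‖z‖ := by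
    rw [hu', colDots_norm_sq]
    exact real_inner_le_norm _ _
  have h5 : ‖z‖ ≤ ‖w‖ := norm_perpProj_le Φ S₂ w
  have h6 : ‖mulVec' Φ u‖ * ‖z‖ ≤ (Real.sqrt (1 + δ) * ‖u‖) * ‖w‖ := by gcongr
  rcases (norm_nonneg u).eq_or_lt with h | h
  · rw [← h]; positivity
  · refine le_of_mul_le_mul_right ?_ h
    nlinarith

end
end

section
/- Let Φ ∈ ℝ^{m×n} have restricted isometry constant δ := δ_{2K} ∈ (0,1) of order 2K, set τ := δ^{1/2}, let x ∈ ℝ^n be K-sparse with support T, |T| = K ≥ 1, and let y = Φx + v. Then for every run of K iterations of OMP applied to (Φ, y), the final residual satisfies ‖r^K‖₂² ≥ (1 − 2τ)·‖x_{Γ^K}‖₂² − (1/τ − 1)·‖v‖₂², where Γ^K := T\T^K and x_{Γ^K} is the restriction of x to the indices in Γ^K. -/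
noncomputable section
open Finset

theorem aux_mulVec_sub {m n : ℕ} (Φ : Matrix (Fin m) (Fin n) ℝ) (a b : Vec n) :
    mulVec' Φ (a - b) = mulVec' Φ a - mulVec' Φ b := by
  ext i
  simp [mulVec', mul_sub, Finset.sum_sub_distrib]

theorem aux_card {m n K : ℕ} {Φ : Matrix (Fin m) (Fin n) ℝ} {y : Vec m}
    (run : OMPRun Φ y K) : ∀ k ≤ K, (run.sets k).card ≤ k := by
  intro k
  induction k with
  | zero => intro _; simp [run.sets_zero]
  | succ k ih =>
    intro hk
    rw [run.sets_succ k (by omega)]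
    have h1 := Finset.card_insert_le (run.idx (k + 1)) (run.sets k)
    have h2 := ih (by omega)
    omega

theorem aux_norm {m : ℕ} (a b : Vec m) (t : ℝ) (ht : 0 < t) :
    (1 - t) * ‖a‖ ^ 2 - (1 / t - 1) * ‖b‖ ^ 2 ≤ ‖a + b‖ ^ 2 := by
  have h1 := norm_add_sq_real a b
  have h2 := norm_add_sq_real (t • a) b
  rw [norm_smul, inner_smul_left, Real.norm_of_nonneg ht.le] at h2
  simp only [conj_trivial] at h2
  have h3 : 0 ≤ ‖t • a + b‖ ^ 2 / t := by positivity
  rw [h2] at h3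
  have h4 : ((t * ‖a‖) ^ 2 + 2 * (t * inner ℝ a b) + ‖b‖ ^ 2) / t
      = t * ‖a‖ ^ 2 + 2 * inner ℝ a b + 1 / t * ‖b‖ ^ 2 := by
    field_simp
  rw [h4] at h3
  rw [h1]
  linarith

/-- lower bound on the final residual energy:
`‖r^K‖² ≥ (1 − 2τ)‖x_{Γ^K}‖² − (1/τ − 1)‖v‖²` with `τ = δ^{1/2}`. -/
theorem stmt18 {m n K : ℕ} (Φ : Matrix (Fin m) (Fin n) ℝ) (δ : ℝ)
    (x : Vec n) (v y : Vec m) (T : Finset (Fin n))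
    (hsupp : suppF x = T) (hcard : T.card = K) (hK1 : 1 ≤ K)
    (hRIP : RIPConst Φ (2 * K) δ) (h0 : 0 < δ) (h1 : δ < 1)
    (hy : y = mulVec' Φ x + v)
    (run : OMPRun Φ y K) :
    (1 - 2 * Real.sqrt δ) * ‖restrict x (T \ run.sets K)‖ ^ 2 -
        (1 / Real.sqrt δ - 1) * ‖v‖ ^ 2 ≤
      ‖run.res K‖ ^ 2 := by
  obtain ⟨k, rfl⟩ : ∃ k, K = k + 1 := ⟨K - 1, by omega⟩
  set τ := Real.sqrt δ with hτ
  have hτ0 : 0 < τ := Real.sqrt_pos.mpr h0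
  have hτ2 : τ ^ 2 = δ := Real.sq_sqrt h0.le
  have hτ1 : τ < 1 := by nlinarith
  have hes := run.est_supp k (by omega)
  have hx : ∀ i, i ∉ T → x i = 0 := by
    intro i hi
    by_contra h
    exact hi (hsupp ▸ by simp [suppF, h])
  have he : ∀ i, i ∉ run.sets (k + 1) → run.est (k + 1) i = 0 := by
    intro i hi
    by_contra h
    exact hi (hes (by simp [suppF, h]))
  set u : Vec n := x - run.est (k + 1) with hu
  have hcu : (suppF u).card ≤ 2 * (k + 1) := by
    have hsub : suppF u ⊆ T ∪ run.sets (k + 1) := by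
      intro i hi
      by_contra h
      simp only [Finset.mem_union, not_or] at h
      have : u i = 0 := by simp [hu, hx i h.1, he i h.2]
      simp [suppF, this] at hi
    have h2 := Finset.card_le_card hsub
    have h3 := Finset.card_union_le T (run.sets (k + 1))
    have h4 := aux_card run (k + 1) le_rfl
    omega
  have hrip := (hRIP.1.2 u hcu).1
  have hr : run.res (k + 1) = mulVec' Φ u + v := by
    rw [run.res_succ k (by omega), hu, aux_mulVec_sub, sub_add_eq_add_sub, ← hy]
  have hn : ‖restrict x (T \ run.sets (k + 1))‖ ^ 2 ≤ ‖u‖ ^ 2 := by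
    rw [EuclideanSpace.norm_sq_eq, EuclideanSpace.norm_sq_eq]
    apply Finset.sum_le_sum
    intro i _
    by_cases hi : i ∈ T \ run.sets (k + 1)
    · have : u i = x i := by simp [hu, he i (Finset.mem_sdiff.mp hi).2]
      simp only [_root_.restrict, if_pos hi, this]
      exact le_rfl
    · simp only [_root_.restrict, if_neg hi]
      simp [sq_nonneg]
  have hmain := aux_norm (mulVec' Φ u) v τ hτ0
  rw [hr]
  set R := ‖restrict x (T \ run.sets (k + 1))‖ ^ 2 with hR
  have hR0 : 0 ≤ R := by positivity
  have e1 : (1 - τ) * ((1 - δ) * R) ≤ (1 - τ) * ‖mulVec' Φ u‖ ^ 2 := by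
    apply mul_le_mul_of_nonneg_left _ (by linarith)
    exact le_trans (mul_le_mul_of_nonneg_left hn (by linarith)) hrip
  have e2 : (1 - 2 * τ) * R ≤ (1 - τ) * ((1 - δ) * R) := by
    rw [← hτ2, ← mul_assoc]
    apply mul_le_mul_of_nonneg_right _ hR0
    nlinarith [mul_pos hτ0 (sub_pos.mpr hτ1), pow_pos hτ0 3]
  linarith

end
end
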